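/- Fix d > 0 and let G_t be the two-dimensional heat kernel. Let φ̄ : [0,∞) → ℝ be measurable with ∫₀ᵗ |φ̄(s)| ds < ∞ for all t > 0, and define û(x,t) := ∫₀ᵗ G_{t−s}(x) φ̄(s) ds for x ≠ 0 and t > 0. Then for every x ∈ ℝ² with x ≠ 0 and every t > 0, the function x ↦ û(x,t) is differentiable at x and its spatial gradient satisfies ‖∇_x û(x,t)‖ ≤ (8 e^{−2}/π) |x|^{−3} · ∫₀ᵗ |φ̄(s)| ds. -/

import Mathlib

open MeasureTheory Real

/-- The two-dimensional heat (Green's) kernel with diffusion coefficient `d`. -/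
noncomputable def heatKernel (d t : ℝ) (x : EuclideanSpace ℝ (Fin 2)) : ℝ :=
  (4 * Real.pi * d * t)⁻¹ * Real.exp (-‖x‖ ^ 2 / (4 * d * t))

/-!
Since `∇G_t(x) = -(G_t(x) / (2dt)) x`, the substitution `a = ‖x‖² / (4dt)` gives
`‖∇G_t(x)‖ = (2/π) ‖x‖⁻³ · a² e⁻ᵃ`, and `a² e⁻ᵃ` is at most its value `4e⁻²` at `a = 2`. The
resulting bound does not depend on `t` and is locally uniform in `x ≠ 0`, so a multiple of `|φ|`
dominates the gradients of the integrand near `x`: one may differentiate under the integral, and the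
same bound passes to the gradient of the integral.
-/

open scoped Topology

theorem pow_mul_exp_neg_le (n : ℕ) {a : ℝ} (ha : 0 ≤ a) : a ^ n * exp (-a) ≤ n ^ n * exp (-n) := by
  rcases n.eq_zero_or_pos with rfl | hn
  · simpa using ha
  have hn' : (n : ℝ) ≠ 0 := by positivity
  calc a ^ n * exp (-a) = n ^ n * (a / n * exp (-(a / n))) ^ n := by
        rw [mul_pow, ← exp_nat_mul, mul_neg, mul_div_cancel₀ _ hn', ← mul_assoc, ← mul_pow,
          mul_div_cancel₀ _ hn']
    _ ≤ n ^ n * exp (-1) ^ n := by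
        gcongr
        exact mul_exp_neg_le_exp_neg_one _
    _ = n ^ n * exp (-n) := by
        rw [← exp_nat_mul, mul_neg_one]

theorem hasFDerivAt_exp_neg_norm_sq_div {E : Type*} [NormedAddCommGroup E]
    [InnerProductSpace ℝ E] (c : ℝ) (x : E) :
    HasFDerivAt (fun y : E => exp (-‖y‖ ^ 2 / c))
      (-(2 / c * exp (-‖x‖ ^ 2 / c)) • innerSL ℝ x) x := by
  simp only [div_eq_mul_inv]
  refine ((hasStrictFDerivAt_norm_sq x).hasFDerivAt.neg.mul_const c⁻¹).exp.congr_fderiv ?_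
  module

theorem hasFDerivAt_integral_mul_of_norm_fderiv_le {α 𝕜 E : Type*} [MeasurableSpace α]
    {μ : Measure α} [RCLike 𝕜] [NormedAddCommGroup E] [NormedSpace 𝕜 E] {K : α → E → 𝕜}
    {φ : α → 𝕜} {x : E} {s : Set E} {B C : ℝ} (hs : s ∈ 𝓝 x)
    (hK_meas : ∀ᶠ y in 𝓝 x, AEStronglyMeasurable (K · y) μ)
    (hK'_meas : AEStronglyMeasurable (fun a => fderiv 𝕜 (K a) x) μ)
    (hK_diff : ∀ᵐ a ∂μ, ∀ y ∈ s, DifferentiableAt 𝕜 (K a) y)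
    (hK_le : ∀ᵐ a ∂μ, ‖K a x‖ ≤ B)
    (hK'_le : ∀ᵐ a ∂μ, ∀ y ∈ s, ‖fderiv 𝕜 (K a) y‖ ≤ C) (hφ : Integrable φ μ) :
    HasFDerivAt (fun y => ∫ a, K a y * φ a ∂μ) (∫ a, φ a • fderiv 𝕜 (K a) x ∂μ) x := by
  refine hasFDerivAt_integral_of_dominated_of_fderiv_le
    (F' := fun y a => φ a • fderiv 𝕜 (K a) y) (bound := fun a => C * ‖φ a‖) hs
    (hK_meas.mono fun y hy => hy.mul hφ.aestronglyMeasurable)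
    (hφ.bdd_mul hK_meas.self_of_nhds hK_le) (hφ.aestronglyMeasurable.smul hK'_meas) ?_
    (hφ.norm.const_mul C)
    (hK_diff.mono fun a ha y hy => (ha y hy).hasFDerivAt.mul_const (φ a))
  filter_upwards [hK'_le] with a ha y hy
  rw [norm_smul, mul_comm]
  gcongr
  exact ha y hy

section HeatKernel

variable {d t : ℝ} {x : EuclideanSpace ℝ (Fin 2)}

theorem measurable_heatKernel (d : ℝ) (x : EuclideanSpace ℝ (Fin 2)) :
    Measurable fun t => heatKernel d t x := by
  unfold heatKernel
  fun_prop

theorem hasFDerivAt_heatKernel (d t : ℝ) (x : EuclideanSpace ℝ (Fin 2)) :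
    HasFDerivAt (heatKernel d t) (-(heatKernel d t x / (2 * d * t)) • innerSL ℝ x) x := by
  refine ((hasFDerivAt_exp_neg_norm_sq_div (4 * d * t) x).const_mul _).congr_fderiv ?_
  rw [smul_smul, heatKernel]
  congr 1
  ring

theorem measurable_fderiv_heatKernel (d : ℝ) (x : EuclideanSpace ℝ (Fin 2)) :
    Measurable fun t => fderiv ℝ (heatKernel d t) x := by
  simp only [(hasFDerivAt_heatKernel d _ x).fderiv]
  have := measurable_heatKernel d x
  fun_prop

theorem heatKernel_nonneg (hd : 0 < d) (ht : 0 < t) (x : EuclideanSpace ℝ (Fin 2)) :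
    0 ≤ heatKernel d t x := by
  unfold heatKernel
  positivity

theorem heatKernel_le (hd : 0 < d) (ht : 0 < t) (hx : x ≠ 0) :
    heatKernel d t x ≤ exp (-1) / π * (‖x‖ ^ 2)⁻¹ := by
  have : 0 < ‖x‖ := norm_pos_iff.mpr hx
  set a := ‖x‖ ^ 2 / (4 * d * t)
  calc heatKernel d t x = π⁻¹ * (‖x‖ ^ 2)⁻¹ * (a * exp (-a)) := by
        simp only [heatKernel, neg_div, a]
        field_simp
    _ ≤ π⁻¹ * (‖x‖ ^ 2)⁻¹ * exp (-1) := by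
        gcongr
        exact mul_exp_neg_le_exp_neg_one a
    _ = exp (-1) / π * (‖x‖ ^ 2)⁻¹ := by ring

theorem norm_fderiv_heatKernel_le (hd : 0 < d) (ht : 0 < t) (hx : x ≠ 0) :
    ‖fderiv ℝ (heatKernel d t) x‖ ≤ 8 * exp (-2) / π * (‖x‖ ^ 3)⁻¹ := by
  have : 0 < ‖x‖ := norm_pos_iff.mpr hx
  set a := ‖x‖ ^ 2 / (4 * d * t)
  have ha_nonneg : 0 ≤ a := by positivity
  calc ‖fderiv ℝ (heatKernel d t) x‖ = heatKernel d t x / (2 * d * t) * ‖x‖ := by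
        rw [(hasFDerivAt_heatKernel d t x).fderiv, norm_smul, norm_neg, innerSL_apply_norm,
          norm_of_nonneg (div_nonneg (heatKernel_nonneg hd ht x) (by positivity))]
    _ = 2 / π * (‖x‖ ^ 3)⁻¹ * (a ^ 2 * exp (-a)) := by
        simp only [heatKernel, neg_div, a]
        field_simp
        norm_num
    _ ≤ 2 / π * (‖x‖ ^ 3)⁻¹ * (2 ^ 2 * exp (-2)) := by
        gcongr 2 / π * (‖x‖ ^ 3)⁻¹ * ?_
        exact_mod_cast pow_mul_exp_neg_le 2 ha_nonneg
    _ = 8 * exp (-2) / π * (‖x‖ ^ 3)⁻¹ := by ring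

end HeatKernel

section Superposition

variable {α : Type*} [MeasurableSpace α] {μ : Measure α} {d : ℝ} {τ φ : α → ℝ}
  {x : EuclideanSpace ℝ (Fin 2)}

theorem hasFDerivAt_integral_heatKernel_mul (hd : 0 < d) (hτ : AEMeasurable τ μ)
    (hτ_pos : ∀ᵐ a ∂μ, 0 < τ a) (hφ : Integrable φ μ) (hx : x ≠ 0) :
    HasFDerivAt (fun y => ∫ a, heatKernel d (τ a) y * φ a ∂μ)
      (∫ a, φ a • fderiv ℝ (heatKernel d (τ a)) x ∂μ) x := by
  have hx' : 0 < ‖x‖ := norm_pos_iff.mpr hx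
  have h_nhds : {y | ‖x‖ / 2 < ‖y‖} ∈ 𝓝 x :=
    continuous_norm.continuousAt.preimage_mem_nhds (Ioi_mem_nhds (half_lt_self hx'))
  refine hasFDerivAt_integral_mul_of_norm_fderiv_le h_nhds
    (B := exp (-1) / π * (‖x‖ ^ 2)⁻¹) (C := 8 * exp (-2) / π * ((‖x‖ / 2) ^ 3)⁻¹)
    (.of_forall fun y =>
      ((measurable_heatKernel d y).comp_aemeasurable hτ).aestronglyMeasurable)
    ((measurable_fderiv_heatKernel d x).comp_aemeasurable hτ).aestronglyMeasurable
    (.of_forall fun a y _ => (hasFDerivAt_heatKernel d (τ a) y).differentiableAt) ?_ ?_ hφ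
  · filter_upwards [hτ_pos] with a ha
    rw [norm_of_nonneg (heatKernel_nonneg hd ha x)]
    exact heatKernel_le hd ha hx
  · filter_upwards [hτ_pos] with a ha y (hy : ‖x‖ / 2 < ‖y‖)
    have hy_ne : y ≠ 0 := norm_pos_iff.mp ((half_pos hx').trans hy)
    calc ‖fderiv ℝ (heatKernel d (τ a)) y‖ ≤ 8 * exp (-2) / π * (‖y‖ ^ 3)⁻¹ :=
          norm_fderiv_heatKernel_le hd ha hy_ne
      _ ≤ 8 * exp (-2) / π * ((‖x‖ / 2) ^ 3)⁻¹ := by gcongr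

theorem norm_integral_smul_fderiv_heatKernel_le (hd : 0 < d) (hτ_pos : ∀ᵐ a ∂μ, 0 < τ a)
    (hφ : Integrable φ μ) (hx : x ≠ 0) :
    ‖∫ a, φ a • fderiv ℝ (heatKernel d (τ a)) x ∂μ‖ ≤
      8 * exp (-2) / π * (‖x‖ ^ 3)⁻¹ * ∫ a, |φ a| ∂μ := by
  rw [← integral_const_mul]
  refine norm_integral_le_of_norm_le (hφ.abs.const_mul _) ?_
  filter_upwards [hτ_pos] with a ha
  rw [norm_smul, norm_eq_abs, mul_comm]
  gcongr
  exact norm_fderiv_heatKernel_le hd ha hx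

theorem source_term_gradient_bound_general (hd : 0 < d) (hτ : AEMeasurable τ μ)
    (hτ_pos : ∀ᵐ a ∂μ, 0 < τ a) (hφ : Integrable φ μ) (hx : x ≠ 0) :
    DifferentiableAt ℝ (fun y => ∫ a, heatKernel d (τ a) y * φ a ∂μ) x ∧
      ‖gradient (fun y => ∫ a, heatKernel d (τ a) y * φ a ∂μ) x‖ ≤
        8 * exp (-2) / π * (‖x‖ ^ 3)⁻¹ * ∫ a, |φ a| ∂μ := by
  have h_deriv := hasFDerivAt_integral_heatKernel_mul hd hτ hτ_pos hφ hx
  refine ⟨h_deriv.differentiableAt, ?_⟩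
  rw [gradient, LinearIsometryEquiv.norm_map, h_deriv.fderiv]
  exact norm_integral_smul_fderiv_heatKernel_le hd hτ_pos hφ hx

end Superposition

/-- For `û(x,t) := ∫₀ᵗ G_{t−s}(x) φ̄(s) ds` with `φ̄` measurable and locally integrable,
for every `x ≠ 0` and `t > 0` the map `x ↦ û(x,t)` is differentiable at `x` and
`‖∇_x û(x,t)‖ ≤ (8e⁻²/π)‖x‖⁻³ ∫₀ᵗ |φ̄(s)| ds`. -/
theorem source_term_gradient_bound (d : ℝ) (hd : 0 < d) (φb : ℝ → ℝ)
    (hφb_meas : Measurable φb)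
    (hφb_int : ∀ t > (0 : ℝ), IntegrableOn (fun s => |φb s|) (Set.Ioc 0 t))
    (uhat : EuclideanSpace ℝ (Fin 2) → ℝ → ℝ)
    (huhat : uhat = fun x t => ∫ s in Set.Ioc (0 : ℝ) t, heatKernel d (t - s) x * φb s) :
    ∀ x : EuclideanSpace ℝ (Fin 2), x ≠ 0 → ∀ t > (0 : ℝ),
      DifferentiableAt ℝ (fun y => uhat y t) x ∧
      ‖gradient (fun y => uhat y t) x‖ ≤
        8 * Real.exp (-2) / Real.pi * (‖x‖ ^ 3)⁻¹ * ∫ s in Set.Ioc (0 : ℝ) t, |φb s| := by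
  intro x hx t ht
  have hφ : IntegrableOn φb (Set.Ioo 0 t) :=
    IntegrableOn.mono_set ((integrable_norm_iff hφb_meas.aestronglyMeasurable).mp (hφb_int t ht))
      Set.Ioo_subset_Ioc_self
  have h_pos : ∀ᵐ s ∂volume.restrict (Set.Ioo 0 t), 0 < t - s :=
    ae_restrict_of_forall_mem measurableSet_Ioo fun s hs => sub_pos.mpr hs.2
  simp only [huhat, integral_Ioc_eq_integral_Ioo]
  exact source_term_gradient_bound_general hd (by fun_prop) h_pos hφ hx
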